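/- arXiv:1812.11378 — 2 statements merged into one kernel-verified Lean document; each statement's English description precedes it below -/
import Mathlib

section
/- Fix h ∈ 𝔥 with h ≠ 0 and ⟨h,h⟩ ≠ 0. Let 𝔥' and 𝔥'' be regular subspaces of 𝔥 and set h' = P_{𝔥'}(h), h'' = P_{𝔥''}(h). Then there exists σ ∈ O(𝔥) with σ(h) = h, σ(𝔥') = 𝔥'', and σ(h') = h'' if and only if all of the following hold: dim 𝔥' = dim 𝔥'', ⟨h',h'⟩ = ⟨h'',h''⟩, (h' = h if and only if h'' = h), and (h' = 0 if and only if h'' = 0). In other words, the O(𝔥)_h-orbits on Reg(𝔥)_h are exactly the fibers of the invariant (dim 𝔥', ⟨h',h'⟩, [h' = h], [h' = 0]). -/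
/-- A subspace `W` is regular if the restriction of the bilinear form `B` to `W`
is nondegenerate. -/
def IsRegularSubspace {V : Type*} [AddCommGroup V] [Module ℂ V]
    (B : LinearMap.BilinForm ℂ V) (W : Submodule ℂ V) : Prop :=
  ∀ x ∈ W, (∀ y ∈ W, B x y = 0) → x = 0

/-- `IsOrthProj B W x y` : `y` is the orthogonal projection `P_W(x)` of `x` onto `W`. -/
def IsOrthProj {V : Type*} [AddCommGroup V] [Module ℂ V]
    (B : LinearMap.BilinForm ℂ V) (W : Submodule ℂ V) (x y : V) : Prop :=
  y ∈ W ∧ ∀ w ∈ W, B (x - y) w = 0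

theorem aux_iso {M N : Type*} [AddCommGroup M] [Module ℂ M] [FiniteDimensional ℂ M]
    [AddCommGroup N] [Module ℂ N] [FiniteDimensional ℂ N]
    (B : LinearMap.BilinForm ℂ M) (C : LinearMap.BilinForm ℂ N)
    (hB : ∀ x y, B x y = B y x) (hC : ∀ x y, C x y = C y x)
    (nB : ∀ x, (∀ y, B x y = 0) → x = 0) (nC : ∀ x, (∀ y, C x y = 0) → x = 0)
    (hd : Module.finrank ℂ M = Module.finrank ℂ N) :
    ∃ e : M ≃ₗ[ℂ] N, ∀ x y, C (e x) (e y) = B x y := by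
  have eB : QuadraticMap.associated (R := ℂ) B.toQuadraticMap = B :=
    QuadraticMap.associated_left_inverse ℂ hB
  have eC : QuadraticMap.associated (R := ℂ) C.toQuadraticMap = C :=
    QuadraticMap.associated_left_inverse ℂ hC
  have h1 := QuadraticForm.equivalent_weightedSumSquares_of_isAlgClosed (K := ℂ)
    B.toQuadraticMap (by rw [eB]; exact nB)
  have h2 := QuadraticForm.equivalent_weightedSumSquares_of_isAlgClosed (K := ℂ)
    C.toQuadraticMap (by rw [eC]; exact nC)
  rw [hd] at h1
  obtain ⟨e⟩ := h1.trans h2.symm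
  have key : ∀ x, C (e x) (e x) = B x x := fun x => by
    have := e.map_app x
    exact this
  refine ⟨e.toLinearEquiv, fun x y => ?_⟩
  change C (e x) (e y) = B x y
  have h3 := key (x + y)
  have e1 : e (x + y) = e x + e y := map_add e.toLinearEquiv x y
  rw [e1] at h3
  simp only [map_add, LinearMap.add_apply] at h3
  rw [key, key, hB y x, hC (e y) (e x)] at h3
  linear_combination h3 / 2

theorem aux_refl {M : Type*} [AddCommGroup M] [Module ℂ M]
    (B : LinearMap.BilinForm ℂ M) (hB : ∀ x y, B x y = B y x)
    (u v : M) (huv : B u u = B v v) (hne : B (u - v) (u - v) ≠ 0) :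
    ∃ e : M ≃ₗ[ℂ] M, (∀ x y, B (e x) (e y) = B x y) ∧ e u = v := by
  have hf : ((2 / B (u - v) (u - v)) • B (u - v)) (u - v) = 2 := by
    simp only [LinearMap.smul_apply, smul_eq_mul]
    field_simp
  refine ⟨Module.reflection hf, fun x y => ?_, ?_⟩
  · simp only [Module.reflection_apply, LinearMap.smul_apply, smul_eq_mul]
    generalize u - v = a at *
    simp only [map_sub, map_smul, LinearMap.sub_apply, LinearMap.smul_apply, smul_eq_mul]
    rw [hB x a]
    field_simp
    ring
  · rw [Module.reflection_apply]
    have : ((2 / B (u - v) (u - v)) • B (u - v)) u = 1 := by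
      simp only [LinearMap.smul_apply, smul_eq_mul]
      rw [div_mul_eq_mul_div, div_eq_one_iff_eq hne]
      simp only [map_sub, LinearMap.sub_apply]
      rw [hB v u]
      linear_combination huv
    rw [this]; simp

theorem aux_trans {M : Type*} [AddCommGroup M] [Module ℂ M]
    (B : LinearMap.BilinForm ℂ M) (hB : ∀ x y, B x y = B y x)
    (nB : ∀ x, (∀ y, B x y = 0) → x = 0)
    (u v : M) (huv : B u u = B v v) (h0 : u = 0 ↔ v = 0) :
    ∃ e : M ≃ₗ[ℂ] M, (∀ x y, B (e x) (e y) = B x y) ∧ e u = v := by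
  by_cases hu0 : u = 0
  · exact ⟨LinearEquiv.refl ℂ M, fun _ _ => rfl, by simp [hu0, h0.1 hu0]⟩
  have hv0 : v ≠ 0 := fun h => hu0 (h0.2 h)
  by_cases h1 : B (u - v) (u - v) = 0
  swap
  · exact aux_refl B hB u v huv h1
  by_cases h2 : B (u + v) (u + v) = 0
  swap
  · obtain ⟨e, he, he'⟩ := aux_refl B hB u (-v) (by simpa using huv) (by simpa using h2)
    exact ⟨e.trans (LinearEquiv.neg ℂ), fun x y => by simp [he], by simp [he']⟩
  simp only [map_add, map_sub, LinearMap.add_apply, LinearMap.sub_apply] at h1 h2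
  rw [hB v u] at h1 h2
  have qu : B u u = 0 := by linear_combination (h1 + h2) / 4 + huv / 2
  have qv : B v v = 0 := huv ▸ qu
  have buv : B u v = 0 := by linear_combination (h2 - h1) / 4
  have hx : ∃ x, B u x ≠ 0 ∧ B v x ≠ 0 := by
    obtain ⟨x, hx⟩ : ∃ x, B u x ≠ 0 := by
      by_contra! h; exact hu0 (nB u h)
    obtain ⟨y, hy⟩ : ∃ x, B v x ≠ 0 := by
      by_contra! h; exact hv0 (nB v h)
    by_cases h3 : B v x = 0
    · by_cases h4 : B u y = 0
      · exact ⟨x + y, by simp [h4, hx], by simp [h3, hy]⟩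
      · exact ⟨y, h4, hy⟩
    · exact ⟨x, hx, h3⟩
  obtain ⟨x, hx1, hx2⟩ := hx
  set w := x + (-(B x x) / (2 * B u x)) • u with hw
  have qw : B w w = 0 := by
    simp only [hw, map_add, map_smul, LinearMap.add_apply, LinearMap.smul_apply, smul_eq_mul, qu]
    rw [hB x u]
    field_simp
    ring
  have buw : B u w ≠ 0 := by simpa [hw, qu] using hx1
  have bvw : B v w ≠ 0 := by simpa [hw, hB v u, buv] using hx2
  obtain ⟨e1, he1, he1'⟩ := aux_refl B hB u w (by rw [qu, qw]) (by
    simp only [map_sub, LinearMap.sub_apply, qu, qw, hB w u]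
    intro h; apply buw; linear_combination -h / 2)
  obtain ⟨e2, he2, he2'⟩ := aux_refl B hB w v (by rw [qv, qw]) (by
    simp only [map_sub, LinearMap.sub_apply, qv, qw, hB w v]
    intro h; apply bvw; linear_combination -h / 2)
  exact ⟨e1.trans e2, fun x y => by simp [he1, he2], by simp [he1', he2']⟩

theorem aux_sub {V : Type*} [AddCommGroup V] [Module ℂ V] [FiniteDimensional ℂ V]
    (B : LinearMap.BilinForm ℂ V) (hsymm : ∀ x y, B x y = B y x)
    (W W' : Submodule ℂ V)
    (hW : IsRegularSubspace B W) (hW' : IsRegularSubspace B W')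
    (hd : Module.finrank ℂ W = Module.finrank ℂ W')
    (u v : V) (hu : u ∈ W) (hv : v ∈ W') (huv : B u u = B v v) (h0 : u = 0 ↔ v = 0) :
    ∃ e : W ≃ₗ[ℂ] W', (∀ x y : W, B (e x) (e y) = B x y) ∧ (e ⟨u, hu⟩ : V) = v := by
  have n1 : ∀ x : W, (∀ y, B.restrict W x y = 0) → x = 0 := fun x hx =>
    Subtype.ext (hW x x.2 fun y hy => hx ⟨y, hy⟩)
  have n2 : ∀ x : W', (∀ y, B.restrict W' x y = 0) → x = 0 := fun x hx =>
    Subtype.ext (hW' x x.2 fun y hy => hx ⟨y, hy⟩)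
  obtain ⟨e, he⟩ := aux_iso (B.restrict W) (B.restrict W') (fun _ _ => hsymm _ _)
    (fun _ _ => hsymm _ _) n1 n2 hd
  obtain ⟨f, hf, hf'⟩ := aux_trans (B.restrict W') (fun _ _ => hsymm _ _) n2
    (e ⟨u, hu⟩) ⟨v, hv⟩ ((he _ _).trans huv) (by
      rw [LinearEquiv.map_eq_zero_iff, ← Subtype.coe_inj, ← Subtype.coe_inj]; exact h0)
  exact ⟨e.trans f, fun x y => (hf _ _).trans (he x y), by simp [hf']⟩

theorem aux_orth {V : Type*} [AddCommGroup V] [Module ℂ V] [FiniteDimensional ℂ V]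
    (B : LinearMap.BilinForm ℂ V) (hsymm : ∀ x y, B x y = B y x) (hnd : B.Nondegenerate)
    (W : Submodule ℂ V) (hW : IsRegularSubspace B W) :
    IsCompl W (B.orthogonal W) ∧ IsRegularSubspace B (B.orthogonal W) := by
  have hr : B.IsRefl := fun x y h => by rw [hsymm]; exact h
  have hc : IsCompl W (B.orthogonal W) := by
    rw [LinearMap.BilinForm.isCompl_orthogonal_iff_disjoint hr, Submodule.disjoint_def]
    intro x hx hx'
    exact hW x hx fun y hy => by rw [hsymm]; exact hx' y hy
  refine ⟨hc, fun x hx h => hnd.1 x fun y => ?_⟩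
  obtain ⟨a, ha, b, hb, rfl⟩ := Submodule.mem_sup.1
    (show y ∈ W ⊔ B.orthogonal W by rw [hc.sup_eq_top]; trivial)
  rw [map_add, h b hb, hsymm x a, show B a x = 0 from hx a ha, add_zero]

/-- for `h ≠ 0` with `⟨h,h⟩ ≠ 0`, two elements `(𝔥', h')`, `(𝔥'', h'')` of
`Reg(𝔥)_h` lie in the same `O(𝔥)_h`-orbit iff they have the same invariant
`(dim 𝔥', ⟨h',h'⟩, [h' = h], [h' = 0])`. -/
theorem stabilizer_orbits_reg_h_anisotropic
    {V : Type*} [AddCommGroup V] [Module ℂ V] [FiniteDimensional ℂ V]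
    (B : LinearMap.BilinForm ℂ V)
    (hsymm : ∀ x y, B x y = B y x) (hnd : B.Nondegenerate)
    (h : V) (hh0 : h ≠ 0) (hhh : B h h ≠ 0)
    (W W' : Submodule ℂ V)
    (hW : IsRegularSubspace B W) (hW' : IsRegularSubspace B W')
    (h' h'' : V) (hp' : IsOrthProj B W h h') (hp'' : IsOrthProj B W' h h'') :
    (∃ σ : V ≃ₗ[ℂ] V, (∀ x y, B (σ x) (σ y) = B x y) ∧ σ h = h ∧
        W.map (σ : V →ₗ[ℂ] V) = W' ∧ σ h' = h'') ↔
      (Module.finrank ℂ W = Module.finrank ℂ W' ∧ B h' h' = B h'' h'' ∧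
        (h' = h ↔ h'' = h) ∧ (h' = 0 ↔ h'' = 0)) := by
  constructor
  · rintro ⟨σ, hσ, hσh, hm, hσ'⟩
    refine ⟨?_, ?_, ?_, ?_⟩
    · rw [← hm]; exact (LinearEquiv.finrank_map_eq σ W).symm
    · rw [← hσ', hσ]
    · rw [← hσ']
      constructor
      · intro e; rw [e, hσh]
      · intro e; exact σ.injective (e.trans hσh.symm)
    · rw [← hσ', LinearEquiv.map_eq_zero_iff]
  · rintro ⟨hd, hq, h1, h0⟩
    obtain ⟨c, r⟩ := aux_orth B hsymm hnd W hW
    obtain ⟨c', r'⟩ := aux_orth B hsymm hnd W' hW'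
    have m : h - h' ∈ B.orthogonal W := fun w hw => (hsymm _ _).trans (hp'.2 w hw)
    have m' : h - h'' ∈ B.orthogonal W' := fun w hw => (hsymm _ _).trans (hp''.2 w hw)
    have hd' : Module.finrank ℂ (B.orthogonal W) = Module.finrank ℂ (B.orthogonal W') := by
      rw [LinearMap.BilinForm.finrank_orthogonal hnd, LinearMap.BilinForm.finrank_orthogonal hnd,
        hd]
    obtain ⟨e, he, he'⟩ := aux_sub B hsymm W W' hW hW' hd h' h'' hp'.1 hp''.1 hq h0
    obtain ⟨f, hf, hf'⟩ := aux_sub B hsymm _ _ r r' hd' (h - h') (h - h'') m m' (by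
      have a := hp'.2 h' hp'.1
      have b := hp''.2 h'' hp''.1
      simp only [map_sub, LinearMap.sub_apply] at a b ⊢
      rw [hsymm h' h, hsymm h'' h]
      linear_combination hq - 2 * a + 2 * b - 2 * hq) (by
      rw [sub_eq_zero, sub_eq_zero, eq_comm, h1]; exact eq_comm)
    let σ : V ≃ₗ[ℂ] V := (W.prodEquivOfIsCompl _ c).symm.trans
      ((e.prodCongr f).trans (W'.prodEquivOfIsCompl _ c'))
    have σa : ∀ (a : W) (b : B.orthogonal W), σ ((a : V) + b) = e a + f b := by
      intro a b
      have : (W.prodEquivOfIsCompl _ c).symm ((a : V) + b) = (a, b) := by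
        rw [LinearEquiv.symm_apply_eq]; rfl
      simp only [σ, LinearEquiv.trans_apply, this]
      rfl
    have σW : ∀ a : W, σ a = e a := fun a => by simpa using σa a 0
    have σh' : σ h' = h'' := (σW ⟨h', hp'.1⟩).trans he'
    have dec : ∀ x : V, ∃ (a : W) (b : B.orthogonal W), x = a + b := fun x => by
      obtain ⟨a, ha, b, hb, rfl⟩ := Submodule.mem_sup.1
        (show x ∈ W ⊔ B.orthogonal W by rw [c.sup_eq_top]; trivial)
      exact ⟨⟨a, ha⟩, ⟨b, hb⟩, rfl⟩
    have o : ∀ (U : Submodule ℂ V) (a : U) (b : B.orthogonal U), B a b = 0 :=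
      fun U a b => b.2 a a.2
    refine ⟨σ, ?_, ?_, ?_, σh'⟩
    · intro x y
      obtain ⟨a, b, rfl⟩ := dec x
      obtain ⟨a', b', rfl⟩ := dec y
      rw [σa, σa]
      simp only [map_add, LinearMap.add_apply, he, hf, o]
      rw [hsymm (f b) (e a'), hsymm b a', o, o]
    · have := σa ⟨h', hp'.1⟩ ⟨h - h', m⟩
      rw [he', hf'] at this
      simpa using this
    · ext y
      simp only [Submodule.mem_map]
      constructor
      · rintro ⟨x, hx, rfl⟩
        exact (σW ⟨x, hx⟩) ▸ (e ⟨x, hx⟩).2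
      · intro hy
        exact ⟨e.symm ⟨y, hy⟩, (e.symm ⟨y, hy⟩).2, (σW _).trans (by simp)⟩
end

section
/- Fix h ∈ 𝔥 with h ≠ 0 and ⟨h,h⟩ = 0. Let 𝔥' and 𝔥'' be regular subspaces of 𝔥 and set h' = P_{𝔥'}(h), h'' = P_{𝔥''}(h). Then there exists σ ∈ O(𝔥) with σ(h) = h, σ(𝔥') = 𝔥'', and σ(h') = h'' if and only if all of the following hold: dim 𝔥' = dim 𝔥'', ⟨h',h'⟩ = ⟨h'',h''⟩, (h' = h if and only if h'' = h), and (h' = 0 if and only if h'' = 0). In other words, the O(𝔥)_h-orbits on Reg(𝔥)_h are exactly the fibers of the invariant (dim 𝔥', ⟨h',h'⟩, [h' = h], [h' = 0]). -/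
theorem aux_reflect {X : Type*} [AddCommGroup X] [Module ℂ X]
    (B : LinearMap.BilinForm ℂ X) (hs : ∀ x y, B x y = B y x)
    (x y : X) (hxy : B x x = B y y) (hv : B (x - y) (x - y) ≠ 0) :
    ∃ σ : X ≃ₗ[ℂ] X, (∀ a b, B (σ a) (σ b) = B a b) ∧ σ x = y := by
  obtain ⟨v, hvd⟩ : ∃ v, v = x - y := ⟨_, rfl⟩
  rw [← hvd] at hv
  let f : X →ₗ[ℂ] X := LinearMap.id - (2 / B v v) • (B v).smulRight v
  have hf : ∀ a, f a = a - (2 / B v v * B v a) • v := by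
    intro a; simp [f, smul_smul]
  have hinv : Function.Involutive f := by
    intro a
    rw [hf, hf]
    simp only [map_sub, map_smul, smul_eq_mul]
    have : 2 / B v v * (B v a - 2 / B v v * B v a * B v v) = - (2 / B v v * B v a) := by
      field_simp; ring
    rw [this]; module
  refine ⟨LinearEquiv.ofInvolutive f hinv, ?_, ?_⟩
  · intro a b
    simp only [LinearEquiv.coe_ofInvolutive, hf, map_sub, map_smul, LinearMap.sub_apply,
      LinearMap.smul_apply, smul_eq_mul]
    rw [hs a v]
    field_simp
    ring
  · simp only [LinearEquiv.coe_ofInvolutive, hf]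
    have h1 : 2 * B v x = B v v := by
      subst hvd
      simp only [map_sub, LinearMap.sub_apply]
      rw [hs y x, hxy]; ring
    have : 2 / B v v * B v x = 1 := by
      rw [div_mul_eq_mul_div, h1, div_self hv]
    rw [this, hvd]; module

theorem aux_avoid {X : Type*} [AddCommGroup X] [Module ℂ X]
    (B : LinearMap.BilinForm ℂ X) (hn : ∀ x, (∀ y, B x y = 0) → x = 0)
    (x y : X) (hx : x ≠ 0) (hy : y ≠ 0) : ∃ w, B x w ≠ 0 ∧ B y w ≠ 0 := by
  obtain ⟨a, ha⟩ : ∃ a, B x a ≠ 0 := by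
    by_contra! hc; exact hx (hn x hc)
  obtain ⟨b, hb⟩ : ∃ b, B y b ≠ 0 := by
    by_contra! hc; exact hy (hn y hc)
  by_cases h1 : B y a = 0
  · by_cases h2 : B x b = 0
    · exact ⟨a + b, by simpa [h2] using ha, by simpa [h1] using hb⟩
    · exact ⟨b, h2, hb⟩
  · exact ⟨a, ha, h1⟩

theorem aux_trans_s19 {X : Type*} [AddCommGroup X] [Module ℂ X]
    (B : LinearMap.BilinForm ℂ X) (hs : ∀ x y, B x y = B y x)
    (hn : ∀ x, (∀ y, B x y = 0) → x = 0)
    (x y : X) (hxy : B x x = B y y) (h0 : x = 0 ↔ y = 0) :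
    ∃ σ : X ≃ₗ[ℂ] X, (∀ a b, B (σ a) (σ b) = B a b) ∧ σ x = y := by
  by_cases hx : x = 0
  · exact ⟨LinearEquiv.refl ℂ X, fun _ _ => rfl, by simp [hx, h0.1 hx]⟩
  have hy : y ≠ 0 := fun e => hx (h0.2 e)
  by_cases h1 : B (x - y) (x - y) = 0
  swap
  · exact aux_reflect B hs x y hxy h1
  by_cases h2 : B (x - (-y)) (x - (-y)) = 0
  swap
  · obtain ⟨σ, h3, h4⟩ := aux_reflect B hs x (-y) (by simpa using hxy) h2
    refine ⟨σ.trans (LinearEquiv.neg ℂ), ?_, ?_⟩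
    · intro a b; simp [h3]
    · simp [h4]
  simp only [map_sub, map_neg, LinearMap.sub_apply, LinearMap.neg_apply] at h1 h2
  rw [hs y x, ← hxy] at h1 h2
  have hxx : B x x = 0 := by linear_combination (h1 + h2) / 4
  have hxy0 : B x y = 0 := by linear_combination (h2 - h1) / 4
  obtain ⟨w, hw1, hw2⟩ := aux_avoid B hn x y hx hy
  let c : ℂ := B w w / (2 * B x w)
  have hc : 2 * c * B x w = B w w := by simp only [c]; field_simp
  have hu1 : B x (w - c • x) = B x w := by simp [hxx]
  have hu2 : B y (w - c • x) = B y w := by simp [hs y x, hxy0]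
  have hu3 : B (w - c • x) (w - c • x) = 0 := by
    simp only [map_sub, map_smul, LinearMap.sub_apply, LinearMap.smul_apply, smul_eq_mul]
    rw [hs w x, hxx]; linear_combination -hc
  generalize w - c • x = u at hu1 hu2 hu3
  obtain ⟨σ, h3, h4⟩ := aux_reflect B hs x u (by rw [hxx, hu3]) (by
    simp only [map_sub, LinearMap.sub_apply]
    rw [hs u x, hxx, hu3, hu1]; intro e; apply hw1; linear_combination -e / 2)
  obtain ⟨τ, h5, h6⟩ := aux_reflect B hs u y (by rw [← hxy, hxx, hu3]) (by
    simp only [map_sub, LinearMap.sub_apply]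
    rw [hs u y, ← hxy, hxx, hu3, hu2]; intro e; apply hw2; linear_combination -e / 2)
  exact ⟨σ.trans τ, by intro a b; simp [h3, h5], by simp [h4, h6]⟩

theorem aux_isom {X Y : Type*} [AddCommGroup X] [Module ℂ X] [AddCommGroup Y] [Module ℂ Y]
    [FiniteDimensional ℂ X] [FiniteDimensional ℂ Y]
    (B : LinearMap.BilinForm ℂ X) (hs : ∀ x y, B x y = B y x)
    (hn : ∀ x, (∀ y, B x y = 0) → x = 0)
    (C : LinearMap.BilinForm ℂ Y) (ht : ∀ x y, C x y = C y x)
    (hm : ∀ x, (∀ y, C x y = 0) → x = 0)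
    (hd : Module.finrank ℂ X = Module.finrank ℂ Y) :
    ∃ f : X ≃ₗ[ℂ] Y, ∀ a b, C (f a) (f b) = B a b := by
  have e1 := QuadraticForm.equivalent_weightedSumSquares_of_isAlgClosed
    (LinearMap.BilinMap.toQuadraticMap B)
    (by rw [QuadraticMap.associated_left_inverse ℂ hs]; exact hn)
  have e2 := QuadraticForm.equivalent_weightedSumSquares_of_isAlgClosed
    (LinearMap.BilinMap.toQuadraticMap C)
    (by rw [QuadraticMap.associated_left_inverse ℂ ht]; exact hm)
  rw [hd] at e1
  obtain ⟨f⟩ := e1.trans e2.symm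
  have hf : ∀ a, C (f a) (f a) = B a a := fun a => f.map_app a
  refine ⟨f.toLinearEquiv, fun a b => ?_⟩
  have h1 := hf (a + b)
  have h2 := hf a
  have h3 := hf b
  change C (f a) (f b) = B a b
  have hadd : f (a + b) = f a + f b := map_add f.toLinearEquiv a b
  rw [hadd] at h1
  simp only [map_add, LinearMap.add_apply] at h1
  rw [ht (f b) (f a), hs b a] at h1
  linear_combination (h1 - h2 - h3) / 2

theorem aux_isom_vec {X Y : Type*} [AddCommGroup X] [Module ℂ X] [AddCommGroup Y] [Module ℂ Y]
    [FiniteDimensional ℂ X] [FiniteDimensional ℂ Y]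
    (B : LinearMap.BilinForm ℂ X) (hs : ∀ x y, B x y = B y x)
    (hn : ∀ x, (∀ y, B x y = 0) → x = 0)
    (C : LinearMap.BilinForm ℂ Y) (ht : ∀ x y, C x y = C y x)
    (hm : ∀ x, (∀ y, C x y = 0) → x = 0)
    (hd : Module.finrank ℂ X = Module.finrank ℂ Y)
    (x : X) (y : Y) (hxy : B x x = C y y) (h0 : x = 0 ↔ y = 0) :
    ∃ f : X ≃ₗ[ℂ] Y, (∀ a b, C (f a) (f b) = B a b) ∧ f x = y := by
  obtain ⟨f, hf⟩ := aux_isom B hs hn C ht hm hd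
  obtain ⟨σ, h1, h2⟩ := aux_trans_s19 C ht hm (f x) y (by rw [hf, hxy]) (by simpa using h0)
  exact ⟨f.trans σ, by intro a b; simp [h1, hf], by simpa using h2⟩

theorem aux_compl {V : Type*} [AddCommGroup V] [Module ℂ V] [FiniteDimensional ℂ V]
    (B : LinearMap.BilinForm ℂ V) (hsymm : ∀ x y, B x y = B y x)
    (W : Submodule ℂ V) (hW : IsRegularSubspace B W) : IsCompl W (B.orthogonal W) := by
  rw [LinearMap.BilinForm.isCompl_orthogonal_iff_disjoint
    (fun x y hxy => by rw [hsymm, hxy]), Submodule.disjoint_def]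
  intro x hx hx'
  refine hW x hx fun y hy => ?_
  rw [hsymm]
  exact hx' y hy

theorem aux_orth_reg {V : Type*} [AddCommGroup V] [Module ℂ V] [FiniteDimensional ℂ V]
    (B : LinearMap.BilinForm ℂ V) (hsymm : ∀ x y, B x y = B y x) (hnd : B.Nondegenerate)
    (W : Submodule ℂ V) (hW : IsRegularSubspace B W) :
    IsRegularSubspace B (B.orthogonal W) := by
  intro x hx hx'
  refine hnd.1 x fun y => ?_
  have hy : y ∈ W ⊔ B.orthogonal W := by
    rw [(aux_compl B hsymm W hW).sup_eq_top]; trivial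
  obtain ⟨a, ha, b, hb, rfl⟩ := Submodule.mem_sup.1 hy
  rw [map_add, hx' b hb, hsymm, hx a ha, add_zero]

theorem aux_restrict {V : Type*} [AddCommGroup V] [Module ℂ V]
    (B : LinearMap.BilinForm ℂ V) (W : Submodule ℂ V) (hW : IsRegularSubspace B W) :
    ∀ x, (∀ y, B.restrict W x y = 0) → x = 0 := fun x hx =>
  Subtype.ext (hW x x.2 fun y hy => hx ⟨y, hy⟩)

/-- for `h ≠ 0` with `⟨h,h⟩ = 0`, two elements `(𝔥', h')`, `(𝔥'', h'')` of
`Reg(𝔥)_h` lie in the same `O(𝔥)_h`-orbit iff they have the same invariant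
`(dim 𝔥', ⟨h',h'⟩, [h' = h], [h' = 0])`. -/
theorem stabilizer_orbits_reg_h_isotropic
    {V : Type*} [AddCommGroup V] [Module ℂ V] [FiniteDimensional ℂ V]
    (B : LinearMap.BilinForm ℂ V)
    (hsymm : ∀ x y, B x y = B y x) (hnd : B.Nondegenerate)
    (h : V) (hh0 : h ≠ 0) (hhh : B h h = 0)
    (W W' : Submodule ℂ V)
    (hW : IsRegularSubspace B W) (hW' : IsRegularSubspace B W')
    (h' h'' : V) (hp' : IsOrthProj B W h h') (hp'' : IsOrthProj B W' h h'') :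
    (∃ σ : V ≃ₗ[ℂ] V, (∀ x y, B (σ x) (σ y) = B x y) ∧ σ h = h ∧
        W.map (σ : V →ₗ[ℂ] V) = W' ∧ σ h' = h'') ↔
      (Module.finrank ℂ W = Module.finrank ℂ W' ∧ B h' h' = B h'' h'' ∧
        (h' = h ↔ h'' = h) ∧ (h' = 0 ↔ h'' = 0)) := by
  constructor
  · rintro ⟨σ, h1, h2, rfl, rfl⟩
    refine ⟨(LinearEquiv.finrank_map_eq σ W).symm, (h1 _ _).symm, ?_, by simp⟩
    constructor
    · intro e; rw [e, h2]
    · intro e; exact σ.injective (e.trans h2.symm)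
  · rintro ⟨hd, hq, hh, hz⟩
    have key : ∀ (U : Submodule ℂ V) (k : V), IsOrthProj B U h k →
        h - k ∈ B.orthogonal U ∧ B (h - k) (h - k) = - B k k := by
      intro U k hk
      refine ⟨fun w hw => ?_, ?_⟩
      · change B w (h - k) = 0
        rw [hsymm]; exact hk.2 w hw
      · have := hk.2 k hk.1
        rw [map_sub (B (h - k)), this]
        simp only [map_sub, LinearMap.sub_apply] at this ⊢
        rw [hsymm k h, hhh]; linear_combination -this
    obtain ⟨k1, k2⟩ := key W h' hp'
    obtain ⟨l1, l2⟩ := key W' h'' hp''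
    obtain ⟨f, hf, hfx⟩ := aux_isom_vec (B.restrict W) (fun _ _ => hsymm _ _)
      (aux_restrict B W hW) (B.restrict W') (fun _ _ => hsymm _ _) (aux_restrict B W' hW')
      hd ⟨h', hp'.1⟩ ⟨h'', hp''.1⟩ hq (by simpa using hz)
    obtain ⟨g, hg, hgx⟩ := aux_isom_vec (B.restrict (B.orthogonal W)) (fun _ _ => hsymm _ _)
      (aux_restrict B _ (aux_orth_reg B hsymm hnd W hW))
      (B.restrict (B.orthogonal W')) (fun _ _ => hsymm _ _)
      (aux_restrict B _ (aux_orth_reg B hsymm hnd W' hW'))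
      (by rw [LinearMap.BilinForm.finrank_orthogonal hnd,
            LinearMap.BilinForm.finrank_orthogonal hnd, hd])
      ⟨h - h', k1⟩ ⟨h - h'', l1⟩
      (by change B (h - h') (h - h') = B (h - h'') (h - h''); rw [k2, l2, hq])
      (by simp only [Submodule.mk_eq_zero, sub_eq_zero]; rw [eq_comm, hh, eq_comm])
    have c1 := aux_compl B hsymm W hW
    have c2 := aux_compl B hsymm W' hW'
    let σ : V ≃ₗ[ℂ] V := ((Submodule.prodEquivOfIsCompl _ _ c1).symm.trans
      (LinearEquiv.prodCongr f g)).trans (Submodule.prodEquivOfIsCompl _ _ c2)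
    have hσ : ∀ (a : W) (b : B.orthogonal W), σ ((a : V) + b) = (f a : V) + g b := by
      intro a b
      have : (Submodule.prodEquivOfIsCompl _ _ c1).symm ((a : V) + b) = (a, b) := by
        rw [LinearEquiv.symm_apply_eq]; rfl
      simp only [σ, LinearEquiv.trans_apply, this]
      rfl
    have hσW : ∀ a : W, σ a = f a := by
      intro a
      have := hσ a 0
      simpa using this
    have hfin : σ h' = h'' := by
      rw [hσW ⟨h', hp'.1⟩, hfx]
    refine ⟨σ, ?_, ?_, ?_, hfin⟩
    · have dec : ∀ x : V, ∃ (a : W) (b : B.orthogonal W), x = (a : V) + b := fun x =>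
        ⟨_, _, ((Submodule.prodEquivOfIsCompl _ _ c1).apply_symm_apply x).symm⟩
      intro x y
      obtain ⟨a, b, rfl⟩ := dec x
      obtain ⟨c, d, rfl⟩ := dec y
      have o1 : ∀ (U : Submodule ℂ V) (p : U) (q : B.orthogonal U), B p q = 0 :=
        fun U p q => q.2 p p.2
      have o2 : ∀ (U : Submodule ℂ V) (p : U) (q : B.orthogonal U), B q p = 0 :=
        fun U p q => by rw [hsymm]; exact o1 U p q
      have f1 : B (f a) (f c) = B a c := hf a c
      have g1 : B (g b) (g d) = B b d := hg b d
      rw [hσ, hσ]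
      simp only [map_add, LinearMap.add_apply, o1, o2, f1, g1]
    · have := hσ ⟨h', hp'.1⟩ ⟨h - h', k1⟩
      rw [hfx, hgx] at this
      simpa using this
    · ext y
      constructor
      · rintro ⟨x, hx, rfl⟩
        change σ x ∈ W'
        rw [hσW ⟨x, hx⟩]; exact (f _).2
      · intro hy
        refine ⟨f.symm ⟨y, hy⟩, (f.symm ⟨y, hy⟩).2, ?_⟩
        change σ _ = y
        rw [hσW]; simp
end
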